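/- arXiv:2511.05576 — 2 statements merged into one kernel-verified Lean document; each statement's English description precedes it below -/
import Mathlib

section
/- Let k be a field, let (X, Y) be a generic r×(r+c) matrix with X the first r columns and Y the last c columns, and let A = k[X, Y]/(X − X^{ad}, ∧²(X,Y)), where X^{ad} := H X^t H for H the r×r unit anti-diagonal matrix. Then the blow-up of Spec A along the ideal generated by all entries of (X,Y) is smooth of dimension r + c, and each of its standard affine charts D₊(ε_{r₀,s₀}) is isomorphic either to 𝔸_k^{r+c} or to Spec of a polynomial ring localized at one coordinate (hence smooth). -/
/- STATEMENT 3: Let A = k[X,Y]/(X - X^{ad}, ∧²(X,Y)) where (X,Y) is a generic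
r×(r+c) matrix, X its first r columns, X^{ad} = H Xᵗ H (H the unit
anti-diagonal).  The blow-up of Spec A along the ideal of all entries of (X,Y)
is smooth of dimension r + c, and each standard chart D₊(ε_{r₀,s₀}) is
isomorphic either to 𝔸_k^{r+c} or to (Spec of) a polynomial ring localized at
one coordinate.  Charts are presented by adjoining ε-variables with relations
x_p = x_{(r₀,s₀)}·ε_p, ε_{(r₀,s₀)} = 1 and saturating at x_{(r₀,s₀)}. -/

open MvPolynomial

/-- Saturation of an ideal at an element. -/
noncomputable def satAt {P : Type*} [CommRing P] (I : Ideal P) (f : P) : Ideal P :=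
  (I.map (algebraMap P (Localization.Away f))).comap
    (algebraMap P (Localization.Away f))

/-!
On the chart `D₊(ε_{r₀,s₀})` the matrix `(X, Y)` is `t ε`, where `t = x_{r₀,s₀}` is regular
because of the saturation and `ε` has entry `1` at the pivot `(r₀, s₀)`. Cancelling powers of `t`
in the minors and in the symmetry condition shows that `ε = u vᵀ` has rank one, `u` and `v` being
its column and its row through the pivot, and that `ε` is itself symmetric about the
anti-diagonal in its first `r` columns. As `u_{r₀} = 1`, the symmetry amounts to
`v_j = w u_{r+1-j}` for `j ≤ r`, where `w = v_{r+1-r₀}`. So the chart is parametrized by `t`, `u`,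
`w` and the last `c` entries of `v`, subject only to `u_{r₀} = 1` and `v_{s₀} = 1`. If `s₀` lies
among the last `c` columns, the second equation eliminates one entry of `v`; otherwise it reads
`w u_{r+1-s₀} = 1`, which eliminates `w` and inverts `u_{r+1-s₀}`, a coordinate unless it is
already `1`.
-/

open nonZeroDivisors

universe u

section Saturation

variable {P : Type*} [CommRing P] (I : Ideal P) (f : P)

theorem mem_satAt_iff {p : P} : p ∈ satAt I f ↔ ∃ n : ℕ, f ^ n * p ∈ I := by
  simp [satAt, IsLocalization.algebraMap_mem_map_algebraMap_iff (Submonoid.powers f),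
    Submonoid.mem_powers_iff]

theorem le_satAt : I ≤ satAt I f :=
  Ideal.le_comap_map

theorem mk_satAt_mem_nonZeroDivisors : Ideal.Quotient.mk (satAt I f) f ∈ (P ⧸ satAt I f)⁰ := by
  rw [mem_nonZeroDivisors_iff_left]
  intro q hq
  obtain ⟨p, rfl⟩ := Ideal.Quotient.mk_surjective q
  rw [← map_mul, Ideal.Quotient.eq_zero_iff_mem, mem_satAt_iff] at hq
  rw [Ideal.Quotient.eq_zero_iff_mem, mem_satAt_iff]
  obtain ⟨n, hn⟩ := hq
  exact ⟨n + 1, by rwa [pow_succ, mul_assoc]⟩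

variable {I f}

theorem satAt_le_ker {B F : Type*} [CommRing B] [FunLike F P B] [RingHomClass F P B] {φ : F}
    (hI : I ≤ RingHom.ker φ) (hf : φ f ∈ B⁰) : satAt I f ≤ RingHom.ker φ := by
  intro p hp
  obtain ⟨n, hn⟩ := (mem_satAt_iff I f).mp hp
  have hφ : φ f ^ n * φ p = 0 := by simpa using hI hn
  exact (mul_left_mem_nonZeroDivisors_eq_zero_iff (pow_mem hf n)).mp hφ

end Saturation

section LocalizedPolynomialRing

theorem ringKrullDim_le_of_isLocalization {R : Type*} [CommRing R] (M : Submonoid R)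
    (S : Type*) [CommRing S] [Algebra R S] [IsLocalization M S] :
    ringKrullDim S ≤ ringKrullDim R :=
  Order.krullDim_le_of_strictMono (PrimeSpectrum.comap (algebraMap R S)) <|
    Monotone.strictMono_of_injective (fun _ _ h ↦ Ideal.comap_mono h)
      (PrimeSpectrum.localization_comap_injective S M)

theorem ringKrullDim_succ_le_localizationAway_of_surjective {R T : Type*} [CommRing R]
    [CommRing T] {f : R →+* T} (hf : Function.Surjective f) {x a : R} (hx : IsUnit (f x))
    (ha : a ∈ R⁰) (hfa : f a = 0) : ringKrullDim T + 1 ≤ ringKrullDim (Localization.Away x) := by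
  refine ringKrullDim_succ_le_of_surjective (IsLocalization.Away.lift x hx) (fun z ↦ ?_)
    (IsLocalization.nonZeroDivisors_le_comap (Submonoid.powers x) _ ha) (by simpa using hfa)
  obtain ⟨p, rfl⟩ := hf z
  exact ⟨algebraMap _ _ p, by simp⟩

theorem smooth_localizationAway (k : Type*) {R : Type*} [CommRing k] [CommRing R] [Algebra k R]
    [Algebra.Smooth k R] (f : R) : Algebra.Smooth k (Localization.Away f) :=
  have := Algebra.Smooth.of_isLocalization_Away (A := Localization.Away f) f
  Algebra.Smooth.comp k R (Localization.Away f)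

variable (k : Type*) [CommRing k] {σ : Type*} (i : σ)

theorem mvPolynomial_X_mem_nonZeroDivisors : (X i : MvPolynomial σ k) ∈ (MvPolynomial σ k)⁰ :=
  isRegular_iff_mem_nonZeroDivisors.mp isRegular_X

theorem mvPolynomial_X_sub_C_mem_nonZeroDivisors (a : k) :
    (X i - C a : MvPolynomial σ k) ∈ (MvPolynomial σ k)⁰ := by
  let translate : MvPolynomial σ k ≃ₐ[k] MvPolynomial σ k :=
    AlgEquiv.ofAlgHom (aeval fun j ↦ X j - C a) (aeval fun j ↦ X j + C a)
      (by ext; simp) (by ext; simp)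
  have hX : translate (X i) = X i - C a := by simp [translate]
  rw [← hX, ← MulEquivClass.map_nonZeroDivisors translate]
  exact Submonoid.mem_map_of_mem _ (mvPolynomial_X_mem_nonZeroDivisors k i)

theorem ringKrullDim_localizationAway_X [IsNoetherianRing k] [Finite σ] :
    ringKrullDim (Localization.Away (X i : MvPolynomial σ k)) = ringKrullDim k + Nat.card σ := by
  classical
  apply le_antisymm
  · rw [← MvPolynomial.ringKrullDim_of_isNoetherianRing]
    exact ringKrullDim_le_of_isLocalization (Submonoid.powers (X i)) _
  · let evalOne : MvPolynomial σ k →ₐ[k] MvPolynomial {j // j ≠ i} k :=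
      aeval fun j ↦ if h : j = i then 1 else X ⟨j, h⟩
    have evalOne_X : evalOne (X i) = 1 := by simp [evalOne]
    have evalOne_rename : evalOne.comp (rename Subtype.val) = AlgHom.id k _ := by
      apply MvPolynomial.algHom_ext
      intro j
      simp [evalOne, j.2]
    have evalOne_surjective : Function.Surjective evalOne := fun p ↦
      ⟨rename Subtype.val p, DFunLike.congr_fun evalOne_rename p⟩
    have hcard : Nat.card σ = Nat.card {j // j ≠ i} + 1 := by
      rw [← Finite.card_option, Nat.card_congr (Equiv.optionSubtypeNe i)]
    calc ringKrullDim k + Nat.card σ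
        = ringKrullDim (MvPolynomial {j // j ≠ i} k) + 1 := by
          rw [MvPolynomial.ringKrullDim_of_isNoetherianRing, hcard]
          push_cast
          rw [add_assoc]
      _ ≤ _ := ringKrullDim_succ_le_localizationAway_of_surjective (f := evalOne.toRingHom)
          evalOne_surjective (by simp [evalOne_X])
          (mvPolynomial_X_sub_C_mem_nonZeroDivisors k i 1) (by simp [evalOne_X])

end LocalizedPolynomialRing

/-- A point of the chart `D₊(ε_{r₀,s₀})` with values in `B`: the matrix `(X, Y) = t • u vᵀ` of rank
at most one, with the direction `ε = u vᵀ` normalized at `(r₀, s₀)` and symmetric about the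
anti-diagonal in its first `r` columns. Regularity of `t` is not part of the data, so that points
can be pushed forward along any homomorphism. -/
@[ext]
structure ChartPoint {r c : ℕ} (r₀ : Fin r) (s₀ : Fin (r + c)) (B : Type*) [CommRing B] where
  t : B
  u : Fin r → B
  v : Fin (r + c) → B
  u_base : u r₀ = 1
  v_base : v s₀ = 1
  symm : ∀ i j, u i * v (Fin.castAdd c j) = u j.rev * v (Fin.castAdd c i.rev)

namespace ChartPoint

section Functoriality

variable {r c : ℕ} {r₀ : Fin r} {s₀ : Fin (r + c)} {k B C : Type*} [CommRing k]
  [CommRing B] [Algebra k B] [CommRing C] [Algebra k C]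

/-- The image of a chart point under a homomorphism of coefficient algebras. -/
@[simps]
def map (f : B →ₐ[k] C) (p : ChartPoint r₀ s₀ B) : ChartPoint r₀ s₀ C where
  t := f p.t
  u i := f (p.u i)
  v j := f (p.v j)
  u_base := by simp [p.u_base]
  v_base := by simp [p.v_base]
  symm i j := by rw [← map_mul, p.symm, map_mul]

theorem map_id (p : ChartPoint r₀ s₀ B) : p.map (AlgHom.id k B) = p :=
  rfl

theorem map_comp {D : Type*} [CommRing D] [Algebra k D] (g : C →ₐ[k] D) (f : B →ₐ[k] C)
    (p : ChartPoint r₀ s₀ B) : p.map (g.comp f) = (p.map f).map g :=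
  rfl

theorem v_castAdd (p : ChartPoint r₀ s₀ B) (j : Fin r) :
    p.v (Fin.castAdd c j) = p.v (Fin.castAdd c r₀.rev) * p.u j.rev := by
  simpa [p.u_base, mul_comm] using p.symm r₀ j

/-- The chart point with prescribed column direction `u`, where symmetry forces the first `r`
entries of `v` to be `w` times the reversal of `u`, and the last `c` entries are given by `y`. -/
@[simps]
def ofColumn (t : B) (u : Fin r → B) (w : B) (y : Fin c → B) (hu : u r₀ = 1)
    (hv : (Fin.addCases (fun j ↦ w * u j.rev) y : Fin (r + c) → B) s₀ = 1) :
    ChartPoint r₀ s₀ B where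
  t := t
  u := u
  v := Fin.addCases (fun j ↦ w * u j.rev) y
  u_base := hu
  v_base := hv
  symm i j := by
    simp only [Fin.addCases_left, Fin.rev_rev]
    ring

theorem map_ofColumn_eq_iff {t : B} {u : Fin r → B} {w : B} {y : Fin c → B} {hu : u r₀ = 1}
    {hv : (Fin.addCases (fun j ↦ w * u j.rev) y : Fin (r + c) → B) s₀ = 1}
    {f : B →ₐ[k] C} {q : ChartPoint r₀ s₀ C} :
    (ofColumn t u w y hu hv).map f = q ↔ f t = q.t ∧ (∀ i, f (u i) = q.u i) ∧
      f w = q.v (Fin.castAdd c r₀.rev) ∧ ∀ j, f (y j) = q.v (Fin.natAdd r j) := by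
  constructor
  · rintro rfl
    simp [hu]
  · rintro ⟨ht, hu', hw, hy⟩
    ext j
    · exact ht
    · exact hu' j
    · induction j using Fin.addCases with
      | left j =>
        rw [v_castAdd q]
        simp [hw, hu']
      | right j => simp [hy]

end Functoriality

/-- A chart point over `B` is universal if `B` corepresents the functor of chart points on
`k`-algebras. -/
def IsUniversal {r c : ℕ} {r₀ : Fin r} {s₀ : Fin (r + c)} (k : Type u) [CommRing k] {B : Type u}
    [CommRing B] [Algebra k B] (p : ChartPoint r₀ s₀ B) : Prop :=
  ∀ (C : Type u) [CommRing C] [Algebra k C] (q : ChartPoint r₀ s₀ C),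
    ∃! f : B →ₐ[k] C, p.map f = q

section Models

variable (k : Type u) [CommRing k] {r : ℕ} (c : ℕ) (r₀ : Fin r)

/-- The universal column direction: its entry at `r₀` is `1`, and the others are independent
coordinates. The coordinate `X (Fin.castAdd c r₀)` which this leaves free is the one used
for `t`. -/
noncomputable def freeColumn : Fin r → MvPolynomial (Fin (r + c)) k :=
  Function.update (fun i ↦ X (Fin.castAdd c i)) r₀ 1

variable {c} in
/-- The chart point over affine space when the pivot `(r₀, s₀)` lies in the block `Y`. The entry
of `v` at the pivot being `1`, its coordinate serves for the entry of `X` opposite to `r₀`. -/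
noncomputable def affine (j₀ : Fin c) :
    ChartPoint r₀ (Fin.natAdd r j₀) (MvPolynomial (Fin (r + c)) k) :=
  ofColumn (X (Fin.castAdd c r₀)) (freeColumn k c r₀) (X (Fin.natAdd r j₀))
    (Function.update (fun j ↦ X (Fin.natAdd r j)) j₀ 1) (by simp [freeColumn]) (by simp)

variable {c} in
theorem affine_isUniversal (j₀ : Fin c) : (affine k r₀ j₀).IsUniversal k := by
  intro C _ _ q
  refine ⟨aeval (Fin.addCases (Function.update q.u r₀ q.t)
    (Function.update (fun j ↦ q.v (Fin.natAdd r j)) j₀ (q.v (Fin.castAdd c r₀.rev)))), ?_, ?_⟩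
  · refine map_ofColumn_eq_iff.mpr ⟨by simp, fun i ↦ ?_, by simp, fun j ↦ ?_⟩
    · obtain rfl | hi := eq_or_ne i r₀ <;> simp [freeColumn, *, q.u_base]
    · obtain rfl | hj := eq_or_ne j j₀ <;> simp [*, q.v_base]
  · intro f hf
    obtain ⟨ht, hu, hw, hy⟩ := map_ofColumn_eq_iff.mp hf
    ext l
    induction l using Fin.addCases with
    | left i =>
      obtain rfl | hi := eq_or_ne i r₀
      · simpa using ht
      · simpa [freeColumn, hi] using hu i
    | right j =>
      obtain rfl | hj := eq_or_ne j j₀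
      · simpa using hw
      · simpa [hj] using hy j

variable (j₀ : Fin r) (B : Type u) [CommRing B] [Algebra (MvPolynomial (Fin (r + c)) k) B]
  [IsLocalization.Away (freeColumn k c r₀ j₀.rev) B]

/-- The chart point over the localization of affine space at an entry of the column direction, when
the pivot `(r₀, s₀)` lies in the block `X`: there normalization of `v` says that this entry is
inverse to the factor `w`. -/
noncomputable def localized : ChartPoint r₀ (Fin.castAdd c j₀) B :=
  ofColumn (algebraMap (MvPolynomial (Fin (r + c)) k) B (X (Fin.castAdd c r₀)))
    (fun i ↦ algebraMap _ B (freeColumn k c r₀ i))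
    (IsLocalization.Away.invSelf (freeColumn k c r₀ j₀.rev))
    (fun j ↦ algebraMap (MvPolynomial (Fin (r + c)) k) B (X (Fin.natAdd r j)))
    (by simp [freeColumn])
    (by
      dsimp only
      rw [Fin.addCases_left, mul_comm, IsLocalization.Away.mul_invSelf])

theorem localized_isUniversal [Algebra k B] [IsScalarTower k (MvPolynomial (Fin (r + c)) k) B] :
    (localized k c r₀ j₀ B).IsUniversal k := by
  intro C _ _ q
  let φ : MvPolynomial (Fin (r + c)) k →ₐ[k] C :=
    aeval (Fin.addCases (Function.update q.u r₀ q.t) fun j ↦ q.v (Fin.natAdd r j))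
  have φ_freeColumn (i : Fin r) : φ (freeColumn k c r₀ i) = q.u i := by
    obtain rfl | hi := eq_or_ne i r₀ <;> simp [freeColumn, φ, *, q.u_base]
  have hpivot : q.v (Fin.castAdd c r₀.rev) * q.u j₀.rev = 1 := by rw [← q.v_castAdd, q.v_base]
  have hunit : IsUnit (q.u j₀.rev) := .of_mul_eq_one_right _ hpivot
  have φ_unit : IsUnit (φ (freeColumn k c r₀ j₀.rev)) := by rwa [φ_freeColumn]
  let Φ : B →ₐ[k] C := IsLocalization.Away.liftAlgHom (freeColumn k c r₀ j₀.rev) φ_unit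
  have Φ_algebraMap (a) : Φ (algebraMap _ B a) = φ a := IsLocalization.Away.lift_eq _ φ_unit a
  have Φ_invSelf : Φ (IsLocalization.Away.invSelf (freeColumn k c r₀ j₀.rev)) =
      q.v (Fin.castAdd c r₀.rev) := by
    apply hunit.mul_left_cancel
    rw [mul_comm (q.u j₀.rev) (q.v _), hpivot, ← φ_freeColumn, ← Φ_algebraMap, ← map_mul,
      IsLocalization.Away.mul_invSelf, map_one]
  refine ⟨Φ, map_ofColumn_eq_iff.mpr ⟨?_, fun i ↦ ?_, Φ_invSelf, fun j ↦ ?_⟩, ?_⟩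
  · simp [Φ_algebraMap, φ]
  · rw [Φ_algebraMap, φ_freeColumn]
  · simp [Φ_algebraMap, φ]
  · intro f hf
    obtain ⟨ht, hu, -, hy⟩ := map_ofColumn_eq_iff.mp hf
    refine IsLocalization.algHom_ext (Submonoid.powers (freeColumn k c r₀ j₀.rev)) ?_
    ext l
    change f (algebraMap _ B (X l)) = Φ (algebraMap _ B (X l))
    rw [Φ_algebraMap]
    induction l using Fin.addCases with
    | left i =>
      obtain rfl | hi := eq_or_ne i r₀
      · simpa [φ] using ht
      · simpa [freeColumn, φ, hi] using hu i
    | right j => simpa [φ] using hy j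

theorem localized_t_mem_nonZeroDivisors : (localized k c r₀ j₀ B).t ∈ B⁰ :=
  IsLocalization.nonZeroDivisors_le_comap (Submonoid.powers (freeColumn k c r₀ j₀.rev)) B
    (mvPolynomial_X_mem_nonZeroDivisors k (Fin.castAdd c r₀))

end Models

end ChartPoint

section BlowupChart

/-- The variables `x_p = X (Sum.inl p)` and `ε_p = X (Sum.inr p)` of a chart of the blow-up, for
`p` ranging over the positions in the matrix `(X, Y)`. -/
abbrev ChartVar (r c : ℕ) : Type :=
  (Fin r × Fin (r + c)) ⊕ (Fin r × Fin (r + c))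

variable (k : Type*) [CommRing k] {r c : ℕ} (r₀ : Fin r) (s₀ : Fin (r + c))

/-- The ideal of equations of the chart `D₊(ε_{r₀,s₀})` before saturation: symmetry of `X`, the
`2 × 2` minors of `(X, Y)`, `x_p = x_{r₀,s₀} ε_p` and `ε_{r₀,s₀} = 1`. -/
noncomputable def chartIdeal : Ideal (MvPolynomial (ChartVar r c) k) :=
  Ideal.span {f | ∃ (i j : Fin r),
      f = X (Sum.inl (i, Fin.castAdd c j)) - X (Sum.inl (j.rev, Fin.castAdd c i.rev))} ⊔
  Ideal.span {f | ∃ (i i' : Fin r) (j j' : Fin (r + c)),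
      f = X (Sum.inl (i, j)) * X (Sum.inl (i', j'))
        - X (Sum.inl (i, j')) * X (Sum.inl (i', j))} ⊔
  Ideal.span {f | ∃ p : Fin r × Fin (r + c),
      f = X (Sum.inl p) - X (Sum.inl (r₀, s₀)) * X (Sum.inr p)} ⊔
  Ideal.span {X (Sum.inr (r₀, s₀)) - 1}

/-- The coordinate ring of the chart `D₊(ε_{r₀,s₀})` of the blow-up along the entries of `(X, Y)`.
Saturation at `x_{r₀,s₀}` turns the chart equations into those of the strict transform. -/
abbrev BlowupChart : Type _ :=
  MvPolynomial (ChartVar r c) k ⧸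
    satAt (chartIdeal k r₀ s₀) (X (Sum.inl (r₀, s₀)))

variable {k r₀ s₀}

theorem chartIdeal_le_ker_iff {B : Type*} [CommRing B] [Algebra k B]
    {φ : MvPolynomial (ChartVar r c) k →ₐ[k] B} :
    chartIdeal k r₀ s₀ ≤ RingHom.ker φ ↔
      (∀ i j : Fin r, φ (X (Sum.inl (i, Fin.castAdd c j))) =
        φ (X (Sum.inl (j.rev, Fin.castAdd c i.rev)))) ∧
      (∀ (i i' : Fin r) (j j' : Fin (r + c)),
        φ (X (Sum.inl (i, j))) * φ (X (Sum.inl (i', j'))) =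
          φ (X (Sum.inl (i, j'))) * φ (X (Sum.inl (i', j)))) ∧
      (∀ p, φ (X (Sum.inl p)) = φ (X (Sum.inl (r₀, s₀))) * φ (X (Sum.inr p))) ∧
      φ (X (Sum.inr (r₀, s₀))) = 1 := by
  simp only [chartIdeal, sup_le_iff, Ideal.span_le, Set.subset_def, Set.mem_ofPred_eq,
    Set.mem_singleton_iff, SetLike.mem_coe, RingHom.mem_ker, and_assoc]
  refine and_congr ?_ (and_congr ?_ (and_congr ?_ ?_))
  · exact ⟨fun h i j ↦ sub_eq_zero.mp (by simpa using h _ ⟨i, j, rfl⟩),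
      by rintro h _ ⟨i, j, rfl⟩; rw [map_sub, h, sub_self]⟩
  · exact ⟨fun h i i' j j' ↦ sub_eq_zero.mp (by simpa using h _ ⟨i, i', j, j', rfl⟩),
      by rintro h _ ⟨i, i', j, j', rfl⟩; rw [map_sub, map_mul, map_mul, h, sub_self]⟩
  · exact ⟨fun h p ↦ sub_eq_zero.mp (by simpa using h _ ⟨p, rfl⟩),
      by rintro h _ ⟨p, rfl⟩; rw [map_sub, map_mul, h, sub_self]⟩
  · simp [sub_eq_zero]

end BlowupChart

namespace BlowupChart

variable {k : Type*} [CommRing k] {r c : ℕ} {r₀ : Fin r} {s₀ : Fin (r + c)}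
  {B : Type*} [CommRing B] [Algebra k B]

/-- The quotient map from the ambient polynomial ring to the chart. -/
noncomputable abbrev mk : MvPolynomial (ChartVar r c) k →ₐ[k] BlowupChart k r₀ s₀ :=
  Ideal.Quotient.mkₐ k _

theorem chartIdeal_le_ker_mk :
    chartIdeal k r₀ s₀ ≤ RingHom.ker (mk : _ →ₐ[k] BlowupChart k r₀ s₀) :=
  (le_satAt _ _).trans (Ideal.Quotient.mkₐ_ker k _).ge

theorem mk_x (p : Fin r × Fin (r + c)) : (mk (X (Sum.inl p)) : BlowupChart k r₀ s₀) =
    mk (X (Sum.inl (r₀, s₀))) * mk (X (Sum.inr p)) :=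
  (chartIdeal_le_ker_iff.mp chartIdeal_le_ker_mk).2.2.1 p

theorem mk_ε_pivot : (mk (X (Sum.inr (r₀, s₀))) : BlowupChart k r₀ s₀) = 1 :=
  (chartIdeal_le_ker_iff.mp chartIdeal_le_ker_mk).2.2.2

theorem mk_x_pivot_mul_left_injective :
    Function.Injective fun q : BlowupChart k r₀ s₀ ↦ mk (X (Sum.inl (r₀, s₀))) * q :=
  fun _ _ h ↦ (mul_cancel_left_mem_nonZeroDivisors (mk_satAt_mem_nonZeroDivisors _ _)).mp h

theorem mk_ε_symm (i j : Fin r) :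
    (mk (X (Sum.inr (i, Fin.castAdd c j))) : BlowupChart k r₀ s₀) =
      mk (X (Sum.inr (j.rev, Fin.castAdd c i.rev))) := by
  apply mk_x_pivot_mul_left_injective
  simpa only [← mk_x] using (chartIdeal_le_ker_iff.mp chartIdeal_le_ker_mk).1 i j

theorem mk_ε_eq_mul (i : Fin r) (j : Fin (r + c)) :
    (mk (X (Sum.inr (i, j))) : BlowupChart k r₀ s₀) =
      mk (X (Sum.inr (i, s₀))) * mk (X (Sum.inr (r₀, j))) := by
  have hminor := (chartIdeal_le_ker_iff.mp
    (chartIdeal_le_ker_mk (k := k) (r₀ := r₀) (s₀ := s₀))).2.1 i r₀ j s₀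
  apply mk_x_pivot_mul_left_injective
  apply mk_x_pivot_mul_left_injective
  rw [mk_x (i, j), mk_x (i, s₀), mk_x (r₀, j)] at hminor
  linear_combination hminor

variable (k r₀ s₀) in
/-- The tautological chart point: `t = x_{r₀,s₀}`, and `u`, `v` are the column and the row of `ε`
through the pivot. -/
@[simps]
noncomputable def point : ChartPoint r₀ s₀ (BlowupChart k r₀ s₀) where
  t := mk (X (Sum.inl (r₀, s₀)))
  u i := mk (X (Sum.inr (i, s₀)))
  v j := mk (X (Sum.inr (r₀, j)))
  u_base := mk_ε_pivot
  v_base := mk_ε_pivot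
  symm i j := by rw [← mk_ε_eq_mul, ← mk_ε_eq_mul, mk_ε_symm]

theorem algHom_ext {f g : BlowupChart k r₀ s₀ →ₐ[k] B}
    (h : (point k r₀ s₀).map f = (point k r₀ s₀).map g) : f = g := by
  simp only [ChartPoint.ext_iff, ChartPoint.map_t, ChartPoint.map_u, ChartPoint.map_v,
    funext_iff, point_t, point_u, point_v] at h
  obtain ⟨ht, hu, hv⟩ := h
  have hε (p) : f (mk (X (Sum.inr p))) = g (mk (X (Sum.inr p))) := by
    rw [mk_ε_eq_mul, map_mul, map_mul, hu, hv]
  refine Ideal.Quotient.algHom_ext k (MvPolynomial.algHom_ext ?_)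
  rintro (p | p)
  · change f (mk (X (Sum.inl p))) = g (mk (X (Sum.inl p)))
    rw [mk_x, map_mul, map_mul, ht, hε]
  · exact hε p

theorem exists_map_point_eq (q : ChartPoint r₀ s₀ B) (hq : q.t ∈ B⁰) :
    ∃ f : BlowupChart k r₀ s₀ →ₐ[k] B, (point k r₀ s₀).map f = q := by
  let φ : MvPolynomial (ChartVar r c) k →ₐ[k] B :=
    aeval (Sum.elim (fun p ↦ q.t * (q.u p.1 * q.v p.2)) fun p ↦ q.u p.1 * q.v p.2)
  have φ_x (p) : φ (X (Sum.inl p)) = q.t * (q.u p.1 * q.v p.2) := by simp [φ]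
  have φ_ε (p) : φ (X (Sum.inr p)) = q.u p.1 * q.v p.2 := by simp [φ]
  have φ_pivot : φ (X (Sum.inl (r₀, s₀))) = q.t := by simp [φ_x, q.u_base, q.v_base]
  have hker : chartIdeal k r₀ s₀ ≤ RingHom.ker φ := by
    refine chartIdeal_le_ker_iff.mpr ⟨fun i j ↦ ?_, fun i i' j j' ↦ ?_, fun p ↦ ?_, ?_⟩
    · rw [φ_x, φ_x, q.symm]
    · simp only [φ_x]
      ring
    · rw [φ_x, φ_pivot, φ_ε]
    · rw [φ_ε, q.u_base, q.v_base, one_mul]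
  have hsat := satAt_le_ker hker (φ_pivot ▸ hq)
  refine ⟨Ideal.Quotient.liftₐ _ φ fun a ha ↦ hsat ha, ?_⟩
  ext
  · exact φ_pivot
  · exact (φ_ε _).trans (by rw [q.v_base, mul_one])
  · exact (φ_ε _).trans (by rw [q.u_base, one_mul])

end BlowupChart

section Main

variable {k : Type u} [CommRing k] {r c : ℕ} {r₀ : Fin r} {s₀ : Fin (r + c)}

theorem ChartPoint.IsUniversal.nonempty_algEquiv {B : Type u} [CommRing B] [Algebra k B]
    {p : ChartPoint r₀ s₀ B} (hp : p.IsUniversal k) (ht : p.t ∈ B⁰) :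
    Nonempty (BlowupChart k r₀ s₀ ≃ₐ[k] B) := by
  obtain ⟨g, hg, -⟩ := hp _ (BlowupChart.point k r₀ s₀)
  obtain ⟨f, hf⟩ := BlowupChart.exists_map_point_eq (k := k) p ht
  refine ⟨AlgEquiv.ofAlgHom f g ((hp B p).unique ?_ ?_) (BlowupChart.algHom_ext ?_)⟩
  · rw [ChartPoint.map_comp, hg, hf]
  · exact p.map_id
  · rw [ChartPoint.map_comp, hf, hg, ChartPoint.map_id]

variable (k r₀ s₀) in
theorem BlowupChart.exists_algEquiv :
    Nonempty (BlowupChart k r₀ s₀ ≃ₐ[k] MvPolynomial (Fin (r + c)) k) ∨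
    ∃ i : Fin (r + c), Nonempty
      (BlowupChart k r₀ s₀ ≃ₐ[k] Localization.Away (X i : MvPolynomial (Fin (r + c)) k)) := by
  induction s₀ using Fin.addCases with
  | right j₀ =>
    exact .inl <| (ChartPoint.affine_isUniversal k r₀ j₀).nonempty_algEquiv
      (mvPolynomial_X_mem_nonZeroDivisors k _)
  | left j₀ =>
    have localized_equiv (B : Type u) [CommRing B] [Algebra (MvPolynomial (Fin (r + c)) k) B]
        [IsLocalization.Away (ChartPoint.freeColumn k c r₀ j₀.rev) B] [Algebra k B]
        [IsScalarTower k (MvPolynomial (Fin (r + c)) k) B] :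
        Nonempty (BlowupChart k r₀ (Fin.castAdd c j₀) ≃ₐ[k] B) :=
      (ChartPoint.localized_isUniversal k c r₀ j₀ B).nonempty_algEquiv
        (ChartPoint.localized_t_mem_nonZeroDivisors k c r₀ j₀ B)
    by_cases hj : j₀.rev = r₀
    · have : IsLocalization.Away (ChartPoint.freeColumn k c r₀ j₀.rev)
          (MvPolynomial (Fin (r + c)) k) :=
        IsLocalization.away_of_isUnit_of_bijective _ (by simp [ChartPoint.freeColumn, hj])
          Function.bijective_id
      exact .inl (localized_equiv _)
    · have hX : ChartPoint.freeColumn k c r₀ j₀.rev = X (Fin.castAdd c j₀.rev) := by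
        simp [ChartPoint.freeColumn, hj]
      have : IsLocalization.Away (ChartPoint.freeColumn k c r₀ j₀.rev)
          (Localization.Away (X (Fin.castAdd c j₀.rev) : MvPolynomial (Fin (r + c)) k)) :=
        hX ▸ inferInstance
      exact .inr ⟨Fin.castAdd c j₀.rev, localized_equiv _⟩

variable (k r₀ s₀) in
theorem blowup_chart_of_symmetric_determinantal_general [IsNoetherianRing k] :
    Algebra.Smooth k (BlowupChart k r₀ s₀) ∧
    ringKrullDim (BlowupChart k r₀ s₀) = ringKrullDim k + (r + c : ℕ) ∧
    (Nonempty (BlowupChart k r₀ s₀ ≃ₐ[k] MvPolynomial (Fin (r + c)) k) ∨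
     ∃ i : Fin (r + c), Nonempty
      (BlowupChart k r₀ s₀ ≃ₐ[k] Localization.Away (X i : MvPolynomial (Fin (r + c)) k))) := by
  have hequiv := BlowupChart.exists_algEquiv k r₀ s₀
  have hsmooth : Algebra.Smooth k (MvPolynomial (Fin (r + c)) k) := {}
  refine ⟨?_, ?_, hequiv⟩ <;> obtain ⟨⟨e⟩⟩ | ⟨i, ⟨e⟩⟩ := hequiv
  · exact .of_equiv e.symm
  · have := smooth_localizationAway k (X i : MvPolynomial (Fin (r + c)) k)
    exact .of_equiv e.symm
  · simp [ringKrullDim_eq_of_ringEquiv e.toRingEquiv]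
  · simp [ringKrullDim_eq_of_ringEquiv e.toRingEquiv, ringKrullDim_localizationAway_X]

end Main

theorem blowup_chart_of_symmetric_determinantal
    (k : Type) [Field k] (r c : ℕ) (hr : 1 ≤ r)
    (r₀ : Fin r) (s₀ : Fin (r + c))
    (I₀ : Ideal (MvPolynomial ((Fin r × Fin (r + c)) ⊕ (Fin r × Fin (r + c))) k))
    (hI₀ : I₀ =
      -- the symmetry condition X = X^{ad}, i.e. x_{i,j} = x_{r+1-j, r+1-i}
      Ideal.span {f | ∃ (i j : Fin r),
          f = X (Sum.inl (i, Fin.castAdd c j))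
            - X (Sum.inl (j.rev, Fin.castAdd c i.rev))} ⊔
      -- the 2×2 minors of the full r×(r+c) matrix (X,Y)
      Ideal.span {f | ∃ (i i' : Fin r) (j j' : Fin (r + c)),
          f = X (Sum.inl (i, j)) * X (Sum.inl (i', j'))
            - X (Sum.inl (i, j')) * X (Sum.inl (i', j))} ⊔
      -- blow-up chart relations x_p = x_{(r₀,s₀)} ε_p  and  ε_{(r₀,s₀)} = 1
      Ideal.span {f | ∃ p : Fin r × Fin (r + c),
          f = X (Sum.inl p) - X (Sum.inl (r₀, s₀)) * X (Sum.inr p)} ⊔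
      Ideal.span {X (Sum.inr (r₀, s₀)) - 1}) :
    -- each chart is smooth of dimension r + c ...
    Algebra.FormallySmooth k
      (MvPolynomial ((Fin r × Fin (r + c)) ⊕ (Fin r × Fin (r + c))) k ⧸
        satAt I₀ (X (Sum.inl (r₀, s₀)))) ∧
    ringKrullDim
      (MvPolynomial ((Fin r × Fin (r + c)) ⊕ (Fin r × Fin (r + c))) k ⧸
        satAt I₀ (X (Sum.inl (r₀, s₀)))) = (r + c : ℕ) ∧
    -- ... and is isomorphic to affine (r+c)-space or to a polynomial ring
    -- in r + c variables localized at one coordinate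
    (Nonempty
      ((MvPolynomial ((Fin r × Fin (r + c)) ⊕ (Fin r × Fin (r + c))) k ⧸
          satAt I₀ (X (Sum.inl (r₀, s₀)))) ≃+*
        MvPolynomial (Fin (r + c)) k) ∨
     ∃ i : Fin (r + c), Nonempty
      ((MvPolynomial ((Fin r × Fin (r + c)) ⊕ (Fin r × Fin (r + c))) k ⧸
          satAt I₀ (X (Sum.inl (r₀, s₀)))) ≃+*
        Localization.Away (X i : MvPolynomial (Fin (r + c)) k))) := by
  obtain rfl : I₀ = chartIdeal k r₀ s₀ := hI₀
  obtain ⟨hsmooth, hdim, hequiv⟩ := blowup_chart_of_symmetric_determinantal_general k r₀ s₀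
  exact ⟨hsmooth.formallySmooth, by simpa [-Nat.cast_add] using hdim,
    hequiv.imp (·.map (·.toRingEquiv)) (·.imp fun _ ↦ (·.map (·.toRingEquiv)))⟩
end

section
/- Let k be a field of characteristic ≠ 2 and R = k[T₁, T₂, s, t^{-1}]/(s(s·q(T₂) − 2)) with q(T₂) a nondegenerate quadratic form. Then Spec R is reduced with exactly 2 irreducible components V(s) and V(s·q(T₂) − 2), these components are disjoint (since s = 0 and s·q(T₂) = 2 cannot both hold), and each is smooth of the same dimension. -/
open MvPolynomial

/-
The chart is the affine line with coordinate `s` over the ring `A` of functions of the remaining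
variables, in which `t` is inverted. So `V(s)` is `Spec A`, while `V(s q - 2)` is the graph of
`s = 2 / q`, hence the open subscheme `Spec A[1/q]`; both are smooth and integral. They are disjoint
because `s q - (s q - 2) = 2` is a unit, and a product of coprime primes is a radical ideal with
exactly these two minimal primes. The dimensions agree because every maximal ideal of `A` has the
same height, a property inherited by `A[1/q]` since `A` is a Jacobson ring.
-/

section CoprimePrincipalIdeals

variable {R : Type*} [CommRing R]

lemma isCoprime_mul_sub_of_isUnit (x y : R) {c : R} (hc : IsUnit c) : IsCoprime x (x * y - c) := by
  rw [sub_eq_add_neg, IsCoprime.mul_add_left_right_iff]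
  exact (isCoprime_one_right (x := x)).of_isCoprime_of_dvd_right hc.neg.dvd

lemma minimalPrimes_inf_eq_pair {I J : Ideal R} [hI : I.IsPrime] [hJ : J.IsPrime]
    (hIJ : ¬ I ≤ J) (hJI : ¬ J ≤ I) : (I ⊓ J).minimalPrimes = {I, J} := by
  ext p
  constructor
  · rintro ⟨⟨hp, hle⟩, hmin⟩
    rcases hp.inf_le.mp hle with hIp | hJp
    · exact .inl (le_antisymm (hmin ⟨hI, inf_le_left⟩ hIp) hIp)
    · exact .inr (le_antisymm (hmin ⟨hJ, inf_le_right⟩ hJp) hJp)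
  · rintro (rfl | rfl)
    · refine ⟨⟨hI, inf_le_left⟩, fun r ⟨hr, hle⟩ hrI ↦ ?_⟩
      exact (hr.inf_le.mp hle).resolve_right fun hJr ↦ hJI (hJr.trans hrI)
    · refine ⟨⟨hJ, inf_le_right⟩, fun r ⟨hr, hle⟩ hrJ ↦ ?_⟩
      exact (hr.inf_le.mp hle).resolve_left fun hIr ↦ hIJ (hIr.trans hrJ)

variable {x y : R}

lemma span_singleton_mul_eq_inf (h : IsCoprime x y) :
    Ideal.span {x * y} = Ideal.span {x} ⊓ Ideal.span {y} := by
  rw [← Ideal.mul_eq_inf_of_isCoprime ((Ideal.isCoprime_span_singleton_iff x y).mpr h),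
    Ideal.span_singleton_mul_span_singleton]

lemma isReduced_quotient_span_mul (h : IsCoprime x y) (hx : (Ideal.span {x}).IsRadical)
    (hy : (Ideal.span {y}).IsRadical) : IsReduced (R ⧸ Ideal.span {x * y}) := by
  rw [← Ideal.isRadical_iff_quotient_reduced, span_singleton_mul_eq_inf h]
  exact hx.inf hy

lemma minimalPrimes_span_mul (h : IsCoprime x y) [hx : (Ideal.span {x}).IsPrime]
    [hy : (Ideal.span {y}).IsPrime] :
    (Ideal.span {x * y}).minimalPrimes = {Ideal.span {x}, Ideal.span {y}} := by
  have hsup : Ideal.span {x} ⊔ Ideal.span {y} = ⊤ :=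
    Ideal.isCoprime_iff_sup_eq.mp ((Ideal.isCoprime_span_singleton_iff x y).mpr h)
  rw [span_singleton_mul_eq_inf h]
  refine minimalPrimes_inf_eq_pair (fun hle ↦ hy.ne_top ?_) fun hle ↦ hx.ne_top ?_
  · rwa [sup_eq_right.mpr hle] at hsup
  · rwa [sup_eq_left.mpr hle] at hsup

end CoprimePrincipalIdeals

/-- A ring all of whose maximal ideals have height `d`, as in EGA IV, 0.14.1. In contrast to the
Krull dimension alone, this passes to localizations of Jacobson rings away from one element. -/
def IsEquicodimensional (R : Type*) [CommRing R] (d : ℕ∞) : Prop :=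
  ∀ M : Ideal R, M.IsMaximal → M.height = d

namespace IsEquicodimensional

variable {R S : Type*} [CommRing R] [CommRing S] {d : ℕ∞}

lemma ringKrullDim_eq [Nontrivial R] (h : IsEquicodimensional R d) : ringKrullDim R = d := by
  refine le_antisymm ?_ ?_
  · exact (ringKrullDim_le_iff_isMaximal_height_le _).mpr fun M hM ↦ by rw [h M hM]
  · obtain ⟨M, hM⟩ := Ideal.exists_maximal R
    rw [← h M hM]
    exact M.height_le_ringKrullDim_of_ne_top hM.ne_top

lemma of_ringEquiv (e : R ≃+* S) (h : IsEquicodimensional R d) : IsEquicodimensional S d :=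
  fun M _ ↦ by rw [← e.height_comap M, h _ inferInstance]

lemma of_field (k : Type*) [Field k] : IsEquicodimensional k 0 := fun M hM ↦ by
  rw [Ideal.eq_bot_of_prime M, Ideal.height_bot]

lemma polynomial [IsNoetherianRing R] [IsJacobsonRing R] (h : IsEquicodimensional R d) :
    IsEquicodimensional (Polynomial R) (d + 1) := fun M _ ↦ by
  have hM : (M.under R).IsMaximal := Polynomial.isMaximal_comap_C_of_isJacobsonRing M
  rw [Polynomial.height_eq_height_add_one (M.under R) M, h _ hM]

lemma mvPolynomial [IsNoetherianRing R] [IsJacobsonRing R] (h : IsEquicodimensional R d)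
    (σ : Type*) [Finite σ] : IsEquicodimensional (MvPolynomial σ R) (d + Nat.card σ) := by
  induction σ using Finite.induction_empty_option with
  | of_equiv e ih =>
    rw [← Nat.card_congr e]
    exact ih.of_ringEquiv (renameEquiv R e).toRingEquiv
  | h_empty => simpa using h.of_ringEquiv (isEmptyRingEquiv R PEmpty).symm
  | @h_option τ _ ih =>
    rw [Finite.card_option, Nat.cast_add, Nat.cast_one, ← add_assoc]
    exact ih.polynomial.of_ringEquiv (optionEquivLeft R τ).symm.toRingEquiv

lemma of_isLocalizationAway [IsJacobsonRing R] [Algebra R S] (f : R) [IsLocalization.Away f S]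
    (h : IsEquicodimensional R d) : IsEquicodimensional S d := fun M hM ↦ by
  rw [← IsLocalization.height_under (Submonoid.powers f) M]
  exact h _ ((IsLocalization.isMaximal_iff_isMaximal_disjoint S f M).mp hM).1

end IsEquicodimensional

/-- An integral, formally smooth `k`-algebra, equicodimensional of dimension `d`. When `k` is a
field and `B` is of finite type, this is the coordinate ring of a smooth integral affine
`k`-scheme of dimension `d`. -/
structure IsSmoothIntegral (k B : Type*) [CommRing k] [CommRing B] [Algebra k B] (d : ℕ∞) :
    Prop where
  isDomain : IsDomain B
  formallySmooth : Algebra.FormallySmooth k B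
  isEquicodimensional : IsEquicodimensional B d

namespace IsSmoothIntegral

lemma mvPolynomial (k σ : Type*) [Field k] [Finite σ] :
    IsSmoothIntegral k (MvPolynomial σ k) (Nat.card σ) where
  isDomain := inferInstance
  formallySmooth := inferInstance
  isEquicodimensional := by simpa using (IsEquicodimensional.of_field k).mvPolynomial σ

variable {k B B' : Type*} [CommRing k] [CommRing B] [CommRing B'] [Algebra k B] [Algebra k B']
  {d : ℕ∞}

lemma ringKrullDim_eq (h : IsSmoothIntegral k B d) : ringKrullDim B = d :=
  have := h.isDomain
  h.isEquicodimensional.ringKrullDim_eq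

lemma of_algEquiv (e : B ≃ₐ[k] B') (h : IsSmoothIntegral k B d) : IsSmoothIntegral k B' d where
  isDomain := have := h.isDomain; e.symm.toMulEquiv.isDomain B
  formallySmooth := have := h.formallySmooth; .of_equiv e
  isEquicodimensional := h.isEquicodimensional.of_ringEquiv e.toRingEquiv

lemma of_isLocalizationAway [IsJacobsonRing B] [Algebra B B'] [IsScalarTower k B B'] {f : B}
    (hf : f ≠ 0) [IsLocalization.Away f B'] (h : IsSmoothIntegral k B d) :
    IsSmoothIntegral k B' d where
  isDomain := have := h.isDomain; IsLocalization.Away.isDomain B' hf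
  formallySmooth :=
    have := h.formallySmooth
    have := Algebra.FormallySmooth.of_isLocalization (Rₘ := B') (.powers f)
    .comp k B B'
  isEquicodimensional := h.isEquicodimensional.of_isLocalizationAway f

lemma isPrime {I : Ideal B} (h : IsSmoothIntegral k (B ⧸ I) d) : I.IsPrime :=
  (Ideal.Quotient.isDomain_iff_prime I).mp h.isDomain

end IsSmoothIntegral

section InvolutiveQuadraticForm

variable {κ R : Type*} [Fintype κ] [CommRing R] {r : κ → κ}

lemma pderiv_sum_X_mul_X_involutive (hr : Function.Involutive r) (j : κ) :
    pderiv j (∑ i, X i * X (r i) : MvPolynomial κ R) = 2 * X (r j) := by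
  classical
  simp only [map_sum, pderiv_mul, pderiv_X, Pi.single_apply, hr.eq_iff, ite_mul, one_mul, zero_mul,
    mul_ite, mul_one, mul_zero, Finset.sum_add_distrib, Finset.sum_ite_eq', Finset.mem_univ,
    if_true]
  exact (two_mul _).symm

lemma sum_X_mul_X_involutive_ne_zero [Nonempty κ] (h2 : (2 : R) ≠ 0)
    (hr : Function.Involutive r) : (∑ i, X i * X (r i) : MvPolynomial κ R) ≠ 0 := by
  intro h
  obtain ⟨j⟩ := ‹Nonempty κ›
  have hgrad : (C 2 * X (r j) : MvPolynomial κ R) = 0 := by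
    rw [map_ofNat, ← pderiv_sum_X_mul_X_involutive hr, h, map_zero]
  exact h2 (by simpa [coeff_C_mul, coeff_X] using congrArg (coeff (.single (r j) 1)) hgrad)

end InvolutiveQuadraticForm

section PolynomialQuotients

open scoped Polynomial

variable {A : Type*} [CommRing A]

/-- The coordinate ring of the hyperplane `X = 0` in the affine line over `A`. -/
noncomputable def quotientSpanXAlgEquiv (A : Type*) [CommRing A] :
    (A[X] ⧸ Ideal.span {(Polynomial.X : A[X])}) ≃ₐ[A] A :=
  (Ideal.quotientEquivAlgOfEq A (by rw [Polynomial.C_0, sub_zero])).trans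
    (Polynomial.quotientSpanXSubCAlgEquiv 0)

lemma isLocalizationAway_quotient_span_X_mul_C_sub_C (q : A) {c : A} (hc : IsUnit c) :
    IsLocalization.Away q
      (A[X] ⧸ Ideal.span {Polynomial.X * Polynomial.C q - Polynomial.C c}) := by
  obtain ⟨u, rfl⟩ := hc
  have hspan : Ideal.span {Polynomial.X * Polynomial.C q - Polynomial.C (u : A)} =
      Ideal.span {Polynomial.C (q * ↑u⁻¹) * Polynomial.X - 1} := by
    rw [← Ideal.span_singleton_mul_left_unit (u.isUnit.map Polynomial.C)
      (Polynomial.C (q * ↑u⁻¹) * Polynomial.X - 1), mul_sub, ← mul_assoc,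
      ← Polynomial.C_mul, mul_left_comm, u.mul_inv, mul_one, mul_one, mul_comm]
  have hassoc : Associated (q * ↑u⁻¹) q := ⟨u, by simp⟩
  have : IsLocalization.Away (q * ↑u⁻¹)
      (A[X] ⧸ Ideal.span {Polynomial.C (q * ↑u⁻¹) * Polynomial.X - 1}) :=
    IsLocalization.adjoin_inv _
  rw [hspan]
  exact IsLocalization.Away.of_associated hassoc

end PolynomialQuotients

/-- The isomorphism of the zero loci of `x` and `y` induced by an isomorphism taking `x` to `y`. -/
noncomputable def quotientSpanSingletonAlgEquiv {k R S : Type*} [CommRing k] [CommRing R]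
    [CommRing S] [Algebra k R] [Algebra k S] (e : R ≃ₐ[k] S) {x : R} {y : S} (h : e x = y) :
    (R ⧸ Ideal.span {x}) ≃ₐ[k] S ⧸ Ideal.span {y} :=
  Ideal.quotientEquivAlg _ _ e (by rw [Ideal.map_span, Set.image_singleton, ← h]; rfl)

section EliminateVariable

open scoped Polynomial

attribute [local instance] Polynomial.algebra

lemma isLocalizationAway_polynomial_C {R : Type*} [CommRing R] (f : R) (A : Type*) [CommRing A]
    [Algebra R A] [IsLocalization.Away f A] : IsLocalization.Away (Polynomial.C f) A[X] := by
  have := Polynomial.isLocalization (Submonoid.powers f) A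
  rwa [Submonoid.map_powers] at this

variable {ι : Type*} (k : Type*) [CommRing k] (s : ι)

open Classical in
/-- Polynomials over `k`, regarded as polynomials in the variable `s` with coefficients in the
remaining variables. -/
noncomputable def polynomialEquiv :
    MvPolynomial ι k ≃ₐ[k] (MvPolynomial {i // i ≠ s} k)[X] :=
  (renameEquiv k (Equiv.optionSubtypeNe s).symm).trans (optionEquivLeft k {i // i ≠ s})

lemma polynomialEquiv_X_self : polynomialEquiv k s (X s) = Polynomial.X := by
  simp [polynomialEquiv]

lemma polynomialEquiv_rename_val (p : MvPolynomial {i // i ≠ s} k) :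
    polynomialEquiv k s (rename Subtype.val p) = Polynomial.C p := by
  induction p using MvPolynomial.induction_on with
  | C a => simp [polynomialEquiv]
  | add p q hp hq => simp only [map_add, hp, hq]
  | mul_X p i hp =>
    rw [map_mul, map_mul, hp, map_mul]
    simp [polynomialEquiv, i.2]

variable {k s} (f : MvPolynomial {i // i ≠ s} k) (L A : Type*) [CommRing L] [CommRing A]
  [Algebra k L] [Algebra (MvPolynomial ι k) L] [IsScalarTower k (MvPolynomial ι k) L]
  [IsLocalization.Away (rename Subtype.val f) L]
  [Algebra k A] [Algebra (MvPolynomial {i // i ≠ s} k) A]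
  [IsScalarTower k (MvPolynomial {i // i ≠ s} k) A] [IsLocalization.Away f A]

/-- The localized form of `polynomialEquiv`: when the inverted element `f` does not involve `s`,
the localization `L` is a polynomial ring in `s` over the localization `A` of the polynomial ring in
the remaining variables. -/
noncomputable def localizedPolynomialEquiv : L ≃ₐ[k] A[X] :=
  have := isLocalizationAway_polynomial_C f A
  IsLocalization.algEquivOfAlgEquiv (M := .powers (rename Subtype.val f))
    (T := .powers (Polynomial.C f)) L A[X] (polynomialEquiv k s)
    (by simp [polynomialEquiv_rename_val])

lemma localizedPolynomialEquiv_algebraMap (p : MvPolynomial ι k) :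
    localizedPolynomialEquiv f L A (algebraMap (MvPolynomial ι k) L p) =
      (polynomialEquiv k s p).map (algebraMap (MvPolynomial {i // i ≠ s} k) A) := by
  have := isLocalizationAway_polynomial_C f A
  exact IsLocalization.algEquivOfAlgEquiv_eq ..

lemma localizedPolynomialEquiv_X_self :
    localizedPolynomialEquiv f L A (algebraMap (MvPolynomial ι k) L (X s)) = Polynomial.X := by
  rw [localizedPolynomialEquiv_algebraMap, polynomialEquiv_X_self, Polynomial.map_X]

lemma localizedPolynomialEquiv_rename_val (p : MvPolynomial {i // i ≠ s} k) :
    localizedPolynomialEquiv f L A (algebraMap (MvPolynomial ι k) L (rename Subtype.val p)) =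
      Polynomial.C (algebraMap (MvPolynomial {i // i ≠ s} k) A p) := by
  rw [localizedPolynomialEquiv_algebraMap, polynomialEquiv_rename_val, Polynomial.map_C]

end EliminateVariable

section Components

open scoped Polynomial

variable {k ι L : Type*} [Field k] [Finite ι] {s : ι} {f q : MvPolynomial {i // i ≠ s} k} {c : k}
  [CommRing L] [Algebra k L] [Algebra (MvPolynomial ι k) L] [IsScalarTower k (MvPolynomial ι k) L]
  [IsLocalization.Away (rename Subtype.val f) L]

variable (L) in
lemma isSmoothIntegral_quotient_span_X (hf : f ≠ 0) :
    IsSmoothIntegral k (L ⧸ Ideal.span {algebraMap (MvPolynomial ι k) L (X s)})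
      (Nat.card {i // i ≠ s}) := by
  have hA : IsSmoothIntegral k (Localization.Away f) (Nat.card {i // i ≠ s}) :=
    (IsSmoothIntegral.mvPolynomial k _).of_isLocalizationAway hf
  let e := (quotientSpanSingletonAlgEquiv _ (localizedPolynomialEquiv_X_self f L _)).trans
    ((quotientSpanXAlgEquiv (Localization.Away f)).restrictScalars k)
  exact hA.of_algEquiv e.symm

variable (L) in
lemma isSmoothIntegral_quotient_span_X_mul_sub (hf : f ≠ 0) (hq : q ≠ 0) (hc : c ≠ 0) :
    IsSmoothIntegral k (L ⧸ Ideal.span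
        {algebraMap (MvPolynomial ι k) L (X s * rename Subtype.val q - C c)})
      (Nat.card {i // i ≠ s}) := by
  let A := Localization.Away f
  have hA : IsSmoothIntegral k A (Nat.card {i // i ≠ s}) :=
    (IsSmoothIntegral.mvPolynomial k _).of_isLocalizationAway hf
  have : IsJacobsonRing A := isJacobsonRing_localization f
  have hqA : algebraMap (MvPolynomial {i // i ≠ s} k) A q ≠ 0 :=
    (map_ne_zero_iff _ (IsLocalization.injective A
      (powers_le_nonZeroDivisors_of_noZeroDivisors hf))).mpr hq
  have := isLocalizationAway_quotient_span_X_mul_C_sub_C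
    (algebraMap (MvPolynomial {i // i ≠ s} k) A q) ((IsUnit.mk0 c hc).map (algebraMap k A))
  have hAq : IsSmoothIntegral k
      (A[X] ⧸ Ideal.span {Polynomial.X * Polynomial.C (algebraMap _ A q) -
        Polynomial.C (algebraMap k A c)}) (Nat.card {i // i ≠ s}) :=
    hA.of_isLocalizationAway hqA
  refine hAq.of_algEquiv (quotientSpanSingletonAlgEquiv (localizedPolynomialEquiv f L A) ?_).symm
  rw [← algebraMap_eq, map_sub, map_mul, map_sub, map_mul, localizedPolynomialEquiv_X_self,
    localizedPolynomialEquiv_rename_val, ← IsScalarTower.algebraMap_apply, AlgEquiv.commutes,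
    IsScalarTower.algebraMap_apply k A A[X], Polynomial.algebraMap_eq]

end Components

theorem strata_chart_disjoint_components_general {k ι L : Type*} [Field k] [Finite ι] (s : ι)
    {f q : MvPolynomial {i // i ≠ s} k} (hf : f ≠ 0) (hq : q ≠ 0) {c : k} (hc : c ≠ 0)
    [CommRing L] [Algebra k L] [Algebra (MvPolynomial ι k) L]
    [IsScalarTower k (MvPolynomial ι k) L] [IsLocalization.Away (rename Subtype.val f) L]
    {x y : L} (hx : x = algebraMap (MvPolynomial ι k) L (X s))
    (hy : y = algebraMap (MvPolynomial ι k) L (X s * rename Subtype.val q - C c)) :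
    IsReduced (L ⧸ Ideal.span {x * y}) ∧
    (Ideal.span {x * y}).minimalPrimes = {Ideal.span {x}, Ideal.span {y}} ∧
    Ideal.span {x} ⊔ Ideal.span {y} = ⊤ ∧
    Algebra.FormallySmooth k (L ⧸ Ideal.span {x}) ∧
    Algebra.FormallySmooth k (L ⧸ Ideal.span {y}) ∧
    ringKrullDim (L ⧸ Ideal.span {x}) = ringKrullDim (L ⧸ Ideal.span {y}) := by
  have hVx : IsSmoothIntegral k (L ⧸ Ideal.span {x}) _ :=
    hx ▸ isSmoothIntegral_quotient_span_X L hf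
  have hVy : IsSmoothIntegral k (L ⧸ Ideal.span {y}) _ :=
    hy ▸ isSmoothIntegral_quotient_span_X_mul_sub L hf hq hc
  have hxy : IsCoprime x y := by
    rw [hx, hy]
    exact (isCoprime_mul_sub_of_isUnit (X s) _ ((IsUnit.mk0 c hc).map C)).map (algebraMap _ L)
  have := hVx.isPrime
  have := hVy.isPrime
  exact ⟨isReduced_quotient_span_mul hxy hVx.isPrime.isRadical hVy.isPrime.isRadical,
    minimalPrimes_span_mul hxy,
    Ideal.isCoprime_iff_sup_eq.mp ((Ideal.isCoprime_span_singleton_iff x y).mpr hxy),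
    hVx.formallySmooth, hVy.formallySmooth, hVx.ringKrullDim_eq.trans hVy.ringKrullDim_eq.symm⟩

theorem strata_chart_disjoint_components
    (k : Type) [Field k] (h2 : (2 : k) ≠ 0)
    (a m : ℕ) (hm : 1 ≤ m)
    -- variables: T₁ = inl (inl i), T₂ = inl (inr i), s = inr 0, t = inr 1
    (q : MvPolynomial ((Fin a ⊕ Fin m) ⊕ Fin 2) k)
    (hq : q = ∑ i : Fin m, X (Sum.inl (Sum.inr i)) * X (Sum.inl (Sum.inr i.rev)))
    (φ : MvPolynomial ((Fin a ⊕ Fin m) ⊕ Fin 2) k →+*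
        Localization.Away (X (Sum.inr 1) : MvPolynomial ((Fin a ⊕ Fin m) ⊕ Fin 2) k))
    (hφ : φ = algebraMap _ _) :
    -- reduced
    IsReduced (Localization.Away
        (X (Sum.inr 1) : MvPolynomial ((Fin a ⊕ Fin m) ⊕ Fin 2) k) ⧸
      Ideal.span {φ (X (Sum.inr 0) * (X (Sum.inr 0) * q - 2))}) ∧
    -- exactly two irreducible components V(s) and V(s·q - 2)
    (Ideal.span {φ (X (Sum.inr 0) * (X (Sum.inr 0) * q - 2))}).minimalPrimes =
      { Ideal.span {φ (X (Sum.inr 0))}, Ideal.span {φ (X (Sum.inr 0) * q - 2)} } ∧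
    -- the two components are disjoint
    (Ideal.span {φ (X (Sum.inr 0))} ⊔ Ideal.span {φ (X (Sum.inr 0) * q - 2)} = ⊤) ∧
    -- each component is smooth, of the same dimension
    Algebra.FormallySmooth k (Localization.Away
        (X (Sum.inr 1) : MvPolynomial ((Fin a ⊕ Fin m) ⊕ Fin 2) k) ⧸
      Ideal.span {φ (X (Sum.inr 0))}) ∧
    Algebra.FormallySmooth k (Localization.Away
        (X (Sum.inr 1) : MvPolynomial ((Fin a ⊕ Fin m) ⊕ Fin 2) k) ⧸
      Ideal.span {φ (X (Sum.inr 0) * q - 2)}) ∧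
    ringKrullDim (Localization.Away
        (X (Sum.inr 1) : MvPolynomial ((Fin a ⊕ Fin m) ⊕ Fin 2) k) ⧸
      Ideal.span {φ (X (Sum.inr 0))}) =
    ringKrullDim (Localization.Away
        (X (Sum.inr 1) : MvPolynomial ((Fin a ⊕ Fin m) ⊕ Fin 2) k) ⧸
      Ideal.span {φ (X (Sum.inr 0) * q - 2)}) := by
  subst hq hφ
  let v (i : Fin m) : {j : (Fin a ⊕ Fin m) ⊕ Fin 2 // j ≠ Sum.inr 0} :=
    ⟨Sum.inl (Sum.inr i), by simp⟩
  have hv : Function.Injective v := fun i j h ↦ by simpa [v] using h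
  have : Nonempty (Fin m) := ⟨0, hm⟩
  let Q : MvPolynomial (Fin m) k := ∑ i, X i * X i.rev
  have hQ : rename v Q ≠ 0 := (map_ne_zero_iff _ (rename_injective v hv)).mpr
    (sum_X_mul_X_involutive_ne_zero h2 Fin.rev_involutive)
  let t : MvPolynomial {j : (Fin a ⊕ Fin m) ⊕ Fin 2 // j ≠ Sum.inr 0} k :=
    X ⟨Sum.inr 1, by simp⟩
  have : IsLocalization.Away (rename Subtype.val t)
      (Localization.Away (X (Sum.inr 1) : MvPolynomial ((Fin a ⊕ Fin m) ⊕ Fin 2) k)) := by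
    rw [rename_X]
    infer_instance
  rw [map_mul]
  exact strata_chart_disjoint_components_general (Sum.inr 0) (X_ne_zero _ : t ≠ 0) hQ h2 rfl
    (by simp [Q, v, map_ofNat C 2])
end
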